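/- (Proposition 3, doubly robust estimand.) Fix d in {(1,1),(0,1),(1,0)} and d' = (0,0). Suppose Assumption DID holds for d and for d', Assumption MAR holds, P(D = d | X) > 0 and P(D = d' | X) > 0 a.s., the denominators of the weights w1 and w2 are finite and strictly positive, all displayed expectations are finite, and φ_{d2}(X) = q_{d2}(X) and φ_0(X) = q_0(X) a.s. If, in addition, either (a) μ_{d'}(X) = m_{d'}(X) a.s., or (b) π_{d1|d2}(X) = p_{d1|d2}(X), π_{d2}(X) = p_{d2}(X), π_{0|0}(X) = p_{0|0}(X), and π_0(X) = p_0(X) a.s., then the missingness-adjusted doubly robust estimand τ^{DR}_{dd'} = E[(w1 − w2) · (ΔY − μ_{d'}(X))] equals τ_{dd'}. -/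

import Mathlib

open MeasureTheory Set
open scoped Classical

noncomputable section

namespace DIDMissing

variable {Ω : Type*} {𝓧 : Type*}

/-- Real-valued indicator of a set. -/
def ind (A : Set Ω) : Ω → ℝ := A.indicator fun _ => (1 : ℝ)

/-- All treatment paths `{0,1}²` (coded as reals). -/
def allPaths : Set (ℝ × ℝ) := {(0, 0), (0, 1), (1, 0), (1, 1)}

/-- The three treated paths `{(1,1), (0,1), (1,0)}`. -/
def threePaths : Set (ℝ × ℝ) := {(1, 1), (0, 1), (1, 0)}

/-- The event `{D = d}` for a treatment path `d = (d₁, d₂)`. -/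
def evD (D1 D2 : Ω → ℝ) (d : ℝ × ℝ) : Set Ω := {ω | D1 ω = d.1 ∧ D2 ω = d.2}

/-- The event `{D₂ = b}`. -/
def evD2 (D2 : Ω → ℝ) (b : ℝ) : Set Ω := {ω | D2 ω = b}

/-- `g` is a (measurable-in-the-covariate) version of the conditional mean `E[Z ∣ A, X]`:
for every bounded measurable `h`, `E[1_A · Z · h(X)] = E[1_A · g(X) · h(X)]`. -/
def IsCondMeanGiven [MeasurableSpace Ω] [MeasurableSpace 𝓧] (P : Measure Ω) (X : Ω → 𝓧)
    (A : Set Ω) (Z : Ω → ℝ) (g : 𝓧 → ℝ) : Prop :=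
  Measurable g ∧
    ∀ h : 𝓧 → ℝ, Measurable h → (∃ C, ∀ x, |h x| ≤ C) →
      ∫ ω, ind A ω * Z ω * h (X ω) ∂P = ∫ ω, ind A ω * g (X ω) * h (X ω) ∂P

/-- Assumption DID for a path `d` relative to `d' = (0,0)`:
(i) no anticipation, `E[Y₀(d) ∣ D = d, X] = E[Y₀(0,0) ∣ D = d, X]` a.s., stated in the
version-free integral form; and (ii) conditional parallel trends, stated as the existence
of a common version of `E[Y₂(0,0) − Y₀(0,0) ∣ X]` and `E[Y₂(0,0) − Y₀(0,0) ∣ D = d, X]`. -/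
def DID [MeasurableSpace Ω] [MeasurableSpace 𝓧] (P : Measure Ω) (X : Ω → 𝓧)
    (D1 D2 : Ω → ℝ) (Y0p Y2p : ℝ × ℝ → Ω → ℝ) (d : ℝ × ℝ) : Prop :=
  (∀ h : 𝓧 → ℝ, Measurable h → (∃ C, ∀ x, |h x| ≤ C) →
      ∫ ω, ind (evD D1 D2 d) ω * Y0p d ω * h (X ω) ∂P
        = ∫ ω, ind (evD D1 D2 d) ω * Y0p (0, 0) ω * h (X ω) ∂P) ∧
  (∃ tr : 𝓧 → ℝ,
      IsCondMeanGiven P X Set.univ (fun ω => Y2p (0, 0) ω - Y0p (0, 0) ω) tr ∧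
      IsCondMeanGiven P X (evD D1 D2 d) (fun ω => Y2p (0, 0) ω - Y0p (0, 0) ω) tr)

/-- Assumption MAR: `S ⟂ (D₁, ΔY) ∣ (D₂, X)`, where `q d₂` is a version of the
missing-data probability `P(S = 1 ∣ D₂ = d₂, X)`, which is `(0,1]`-valued a.s. -/
def MAR [MeasurableSpace Ω] [MeasurableSpace 𝓧] (P : Measure Ω) (X : Ω → 𝓧)
    (D1 D2 S Y0 Y2 : Ω → ℝ) (q : ℝ → 𝓧 → ℝ) : Prop :=
  (∀ d2 ∈ ({0, 1} : Set ℝ), IsCondMeanGiven P X (evD2 D2 d2) S (q d2)) ∧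
  (∀ d2 ∈ ({0, 1} : Set ℝ), ∀ᵐ ω ∂P, 0 < q d2 (X ω) ∧ q d2 (X ω) ≤ 1) ∧
  (∀ d2 ∈ ({0, 1} : Set ℝ), ∀ f : ℝ × ℝ → ℝ, Measurable f → (∃ C, ∀ p, |f p| ≤ C) →
      ∀ h : 𝓧 → ℝ, Measurable h → (∃ C, ∀ x, |h x| ≤ C) →
        ∫ ω, ind (evD2 D2 d2) ω * S ω * f (D1 ω, Y2 ω - Y0 ω) * h (X ω) ∂P
          = ∫ ω, ind (evD2 D2 d2) ω * q d2 (X ω) * f (D1 ω, Y2 ω - Y0 ω) * h (X ω) ∂P)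

/-- The path-dependent ATT `τ_{d,(0,0)} = E[Y₂(d) − Y₂(0,0) ∣ D = d]`. -/
def tau [MeasurableSpace Ω] (P : Measure Ω) (D1 D2 : Ω → ℝ)
    (Y2p : ℝ × ℝ → Ω → ℝ) (d : ℝ × ℝ) : ℝ :=
  (P (evD D1 D2 d)).toReal⁻¹ * ∫ ω in evD D1 D2 d, (Y2p d ω - Y2p (0, 0) ω) ∂P

/-- Numerator of the Hájek weight `w₁`. -/
def n1 (X : Ω → 𝓧) (D1 D2 S : Ω → ℝ) (φ2 : 𝓧 → ℝ) (d : ℝ × ℝ) : Ω → ℝ :=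
  fun ω => S ω / φ2 (X ω) * ind (evD D1 D2 d) ω

/-- Numerator of the Hájek weight `w₂`. -/
def n2 (X : Ω → 𝓧) (D1 D2 S : Ω → ℝ) (φ0 πc πc' π2 π0 : 𝓧 → ℝ) : Ω → ℝ :=
  fun ω => S ω / φ0 (X ω) * (πc (X ω) * π2 (X ω) / (πc' (X ω) * π0 (X ω)))
    * ind (evD D1 D2 (0, 0)) ω

/-- Numerator of the Hájek weight `w₃`. -/
def n3 (X : Ω → 𝓧) (D2 : Ω → ℝ) (πc : 𝓧 → ℝ) (d2 : ℝ) : Ω → ℝ :=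
  fun ω => πc (X ω) * ind (evD2 D2 d2) ω

/-- Numerator of the Hájek weight `w₄`. -/
def n4 (X : Ω → 𝓧) (D2 S : Ω → ℝ) (φ2 πc : 𝓧 → ℝ) (d2 : ℝ) : Ω → ℝ :=
  fun ω => S ω / φ2 (X ω) * πc (X ω) * ind (evD2 D2 d2) ω

/-- The robust estimand `τ^R_{d,(0,0)}`. -/
def tauR [MeasurableSpace Ω] (P : Measure Ω) (X : Ω → 𝓧) (D1 D2 S Y0 Y2 : Ω → ℝ)
    (d : ℝ × ℝ) (μd μd' πc πc' π2 π0 φ2 φ0 : 𝓧 → ℝ) : ℝ :=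
  (∫ ω, (n1 X D1 D2 S φ2 d ω / ∫ ω', n1 X D1 D2 S φ2 d ω' ∂P
        - n2 X D1 D2 S φ0 πc πc' π2 π0 ω / ∫ ω', n2 X D1 D2 S φ0 πc πc' π2 π0 ω' ∂P)
      * (Y2 ω - Y0 ω - μd' (X ω)) ∂P)
  + ∫ ω, (n3 X D2 πc d.2 ω / ∫ ω', n3 X D2 πc d.2 ω' ∂P
        - n4 X D2 S φ2 πc d.2 ω / ∫ ω', n4 X D2 S φ2 πc d.2 ω' ∂P)
      * (μd (X ω) - μd' (X ω)) ∂P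

/-! Given `(D₂, X)`, MAR lets `S / q` be integrated out to `1`, so both weighted means are means
over `{D = d}` and `{D = (0,0)}` in the full population. By parallel trends both groups share the
trend `m(X) = E[Y₂(0,0) - Y₀(0,0) | X]`; with no anticipation, `τ = E[ΔY - m(X) | D = d]`. The
estimand differs from `τ` by `E[m - μ | D = d]` minus the `π_d / π_{d'}`-weighted mean of `m - μ`
over `{D = (0,0)}`. Both terms vanish if `μ = m`, and they cancel if the propensity scores are
correct, because the weighting then turns the covariate law of the second group into that of the
first. -/

section CondExp

variable {m mΩ : MeasurableSpace Ω} {μ : Measure Ω} {f g r : Ω → ℝ}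

lemma setIntegral_eq_of_isPiSystem (hm : m ≤ mΩ) {C : Set (Set Ω)}
    (hC : m = MeasurableSpace.generateFrom C) (hpi : IsPiSystem C)
    (hf : Integrable f μ) (hg : Integrable g μ) (huniv : ∫ ω, f ω ∂μ = ∫ ω, g ω ∂μ)
    (hfg : ∀ s ∈ C, ∫ ω in s, f ω ∂μ = ∫ ω in s, g ω ∂μ) {s : Set Ω} (hs : MeasurableSet[m] s) :
    ∫ ω in s, f ω ∂μ = ∫ ω in s, g ω ∂μ := by
  induction s, hs using MeasurableSpace.induction_on_inter hC hpi with
  | empty => simp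
  | basic s hs => exact hfg s hs
  | compl s hs ih => rw [setIntegral_compl (hm s hs) hf, setIntegral_compl (hm s hs) hg, huniv, ih]
  | iUnion s hdisj hs ih =>
    rw [integral_iUnion (fun n => hm _ (hs n)) hdisj hf.integrableOn,
      integral_iUnion (fun n => hm _ (hs n)) hdisj hg.integrableOn]
    exact tsum_congr ih

lemma mul_ae_eq_condExp_mul (hf : Integrable f μ) (hg : g =ᵐ[μ] μ[f | m])
    (hr : StronglyMeasurable[m] r) (hfr : Integrable (f * r) μ) : g * r =ᵐ[μ] μ[f * r | m] :=
  (hg.mul Filter.EventuallyEq.rfl).trans (condExp_mul_of_stronglyMeasurable_right hr hfr hf).symm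

end CondExp

lemma integrable_and_integrable_of_sub [MeasurableSpace Ω] {μ : Measure Ω} {A : Set Ω}
    (hA : MeasurableSet A) {f g : Ω → ℝ} (hf : ∀ ω ∉ A, f ω = 0) (hg : ∀ ω ∈ A, g ω = 0)
    (hfg : Integrable (fun ω => f ω - g ω) μ) : Integrable f μ ∧ Integrable g μ := by
  have hfi : Integrable f μ := by
    refine (hfg.indicator hA).congr (.of_forall fun ω => ?_)
    by_cases hω : ω ∈ A
    · simp [hω, hg ω hω]
    · simp [hω, hf ω hω]
  refine ⟨hfi, (hfi.sub hfg).congr (.of_forall fun ω => ?_)⟩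
  simp

section Indicator

variable {A B : Set Ω}

lemma ind_mul_eq_indicator (A : Set Ω) (f : Ω → ℝ) : (fun ω => ind A ω * f ω) = A.indicator f := by
  funext ω
  by_cases hω : ω ∈ A <;> simp [ind, hω]

lemma ind_inter (A B : Set Ω) (ω : Ω) : ind (A ∩ B) ω = ind A ω * ind B ω := by
  simp only [ind, ← Set.inter_indicator_mul, mul_one]

lemma abs_ind_le_one (A : Set Ω) (ω : Ω) : |ind A ω| ≤ 1 := by
  by_cases hω : ω ∈ A <;> simp [ind, hω]

variable [MeasurableSpace Ω] {P : Measure Ω}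

lemma measurable_ind (hA : MeasurableSet A) : Measurable (ind A) :=
  measurable_const.indicator hA

lemma integrable_ind [IsFiniteMeasure P] (hA : MeasurableSet A) : Integrable (ind A) P :=
  (integrable_const 1).indicator hA

lemma integrable_of_eq_zero_or_eq_one [IsFiniteMeasure P] {f : Ω → ℝ} (hf : Measurable f)
    (hf01 : ∀ ω, f ω = 0 ∨ f ω = 1) : Integrable f P :=
  .of_bound hf.aestronglyMeasurable 1
    (.of_forall fun ω => by rcases hf01 ω with h | h <;> simp [h])

lemma integral_ind_mul (hA : MeasurableSet A) (f : Ω → ℝ) :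
    ∫ ω, ind A ω * f ω ∂P = ∫ ω in A, f ω ∂P := by
  rw [ind_mul_eq_indicator, integral_indicator hA]

lemma integrable_ind_mul_iff (hA : MeasurableSet A) {f : Ω → ℝ} :
    Integrable (fun ω => ind A ω * f ω) P ↔ IntegrableOn f A P := by
  rw [ind_mul_eq_indicator, integrable_indicator_iff hA]

end Indicator

namespace IsCondMeanGiven

variable {E : Type*} [MeasurableSpace Ω] [m𝓧 : MeasurableSpace 𝓧] [MeasurableSpace E]
  {P : Measure Ω} {X : Ω → 𝓧} {V : Ω → E} {A B : Set Ω} {Z Z' : Ω → ℝ}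
  {g g' p p' r u : 𝓧 → ℝ}

lemma of_setIntegral_eq (hA : MeasurableSet A) (hgm : Measurable g)
    (hg : ∀ h : 𝓧 → ℝ, Measurable h → (∃ C, ∀ x, |h x| ≤ C) →
      ∫ ω in A, Z ω * h (X ω) ∂P = ∫ ω in A, g (X ω) * h (X ω) ∂P) :
    IsCondMeanGiven P X A Z g :=
  ⟨hgm, by simpa only [mul_assoc, integral_ind_mul hA] using hg⟩

lemma setIntegral_eq (hg : IsCondMeanGiven P X A Z g) (hA : MeasurableSet A) {h : 𝓧 → ℝ}
    (hh : Measurable h) (hb : ∃ C, ∀ x, |h x| ≤ C) :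
    ∫ ω in A, Z ω * h (X ω) ∂P = ∫ ω in A, g (X ω) * h (X ω) ∂P := by
  simpa only [mul_assoc, integral_ind_mul hA] using hg.2 h hh hb

lemma setIntegral_preimage (hg : IsCondMeanGiven P X A Z g) (hX : Measurable X)
    (hA : MeasurableSet A) {s : Set 𝓧} (hs : MeasurableSet s) :
    ∫ ω in X ⁻¹' s, Z ω ∂P.restrict A = ∫ ω in X ⁻¹' s, g (X ω) ∂P.restrict A := by
  have h := hg.setIntegral_eq hA (measurable_ind hs) ⟨1, abs_ind_le_one s⟩
  have hcomp (ω : Ω) : ind s (X ω) = ind (X ⁻¹' s) ω := rfl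
  simpa only [hcomp, mul_comm _ (ind _ _), integral_ind_mul (hX hs)] using h

-- `g ∘ X` is not assumed integrable: it is compared with the conditional expectation on the sets
-- `{|g| ≤ n}`, where it is bounded.
lemma comp_ae_eq_condExp [IsFiniteMeasure P] (hg : IsCondMeanGiven P X A Z g) (hX : Measurable X)
    (hA : MeasurableSet A) (hZ : IntegrableOn Z A P) :
    g ∘ X =ᵐ[P.restrict A] (P.restrict A)[Z | m𝓧.comap X] := by
  have hgX : Measurable[m𝓧.comap X] (g ∘ X) := hg.1.comp (comap_measurable X)
  let B (n : ℕ) : Set 𝓧 := {x | |g x| ≤ n}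
  have hB (n : ℕ) : MeasurableSet (B n) := measurableSet_le hg.1.abs measurable_const
  have hBX (n : ℕ) : MeasurableSet[m𝓧.comap X] (X ⁻¹' B n) := ⟨B n, hB n, rfl⟩
  have hlocal (n : ℕ) : (X ⁻¹' B n).indicator (g ∘ X) =ᵐ[P.restrict A]
      (X ⁻¹' B n).indicator ((P.restrict A)[Z | m𝓧.comap X]) := by
    refine Filter.EventuallyEq.trans ?_ (condExp_indicator hZ (hBX n))
    refine ae_eq_condExp_of_forall_setIntegral_eq hX.comap_le (hZ.indicator (hX (hB n)))
      (fun s _ _ => ?_) ?_ (hgX.indicator (hBX n)).stronglyMeasurable.aestronglyMeasurable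
    · refine (Integrable.of_bound (C := n)
        ((hg.1.comp hX).indicator (hX (hB n))).aestronglyMeasurable
        (.of_forall fun ω => ?_)).integrableOn
      by_cases hω : ω ∈ X ⁻¹' B n
      · rw [Set.indicator_of_mem hω]
        exact hω
      · simp [hω]
    · rintro _ ⟨t, ht, rfl⟩ -
      rw [setIntegral_indicator (hX (hB n)), setIntegral_indicator (hX (hB n)), ← preimage_inter]
      exact (hg.setIntegral_preimage hX hA (ht.inter (hB n))).symm
  filter_upwards [ae_all_iff.2 hlocal] with ω hω
  obtain ⟨n, hn⟩ := exists_nat_ge |g (X ω)|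
  have hmem : ω ∈ X ⁻¹' B n := hn
  simpa only [Set.indicator_of_mem hmem] using hω n

lemma integrableOn_comp [IsFiniteMeasure P] (hg : IsCondMeanGiven P X A Z g) (hX : Measurable X)
    (hA : MeasurableSet A) (hZ : IntegrableOn Z A P) : IntegrableOn (fun ω => g (X ω)) A P :=
  integrable_condExp.congr (hg.comp_ae_eq_condExp hX hA hZ).symm

lemma ae_eq [IsFiniteMeasure P] (hg : IsCondMeanGiven P X A Z g) (hg' : IsCondMeanGiven P X A Z g')
    (hX : Measurable X) (hA : MeasurableSet A) (hZ : IntegrableOn Z A P) :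
    ∀ᵐ ω ∂P.restrict A, g (X ω) = g' (X ω) :=
  (hg.comp_ae_eq_condExp hX hA hZ).trans (hg'.comp_ae_eq_condExp hX hA hZ).symm

lemma comp_mul_ae_eq_condExp [IsFiniteMeasure P] (hg : IsCondMeanGiven P X A Z g)
    (hX : Measurable X) (hA : MeasurableSet A) (hZ : IntegrableOn Z A P) (hr : Measurable r)
    (hZr : IntegrableOn (fun ω => Z ω * r (X ω)) A P) :
    (fun ω => g (X ω) * r (X ω)) =ᵐ[P.restrict A]
      (P.restrict A)[fun ω => Z ω * r (X ω) | m𝓧.comap X] :=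
  mul_ae_eq_condExp_mul hZ (hg.comp_ae_eq_condExp hX hA hZ)
    (hr.comp (comap_measurable X)).stronglyMeasurable hZr

lemma integrableOn_comp_mul [IsFiniteMeasure P] (hg : IsCondMeanGiven P X A Z g)
    (hX : Measurable X) (hA : MeasurableSet A) (hZ : IntegrableOn Z A P) (hr : Measurable r)
    (hZr : IntegrableOn (fun ω => Z ω * r (X ω)) A P) :
    IntegrableOn (fun ω => g (X ω) * r (X ω)) A P :=
  integrable_condExp.congr (hg.comp_mul_ae_eq_condExp hX hA hZ hr hZr).symm

lemma setIntegral_mul_comp [IsFiniteMeasure P] (hg : IsCondMeanGiven P X A Z g)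
    (hX : Measurable X) (hA : MeasurableSet A) (hZ : IntegrableOn Z A P) (hr : Measurable r)
    (hZr : IntegrableOn (fun ω => Z ω * r (X ω)) A P) :
    ∫ ω in A, Z ω * r (X ω) ∂P = ∫ ω in A, g (X ω) * r (X ω) ∂P := by
  rw [integral_congr_ae (hg.comp_mul_ae_eq_condExp hX hA hZ hr hZr), integral_condExp hX.comap_le]

lemma congr (hg : IsCondMeanGiven P X A Z g) (hA : MeasurableSet A) (hg'm : Measurable g')
    (hZ : ∀ ω ∈ A, Z ω = Z' ω) (hgg' : ∀ᵐ ω ∂P.restrict A, g (X ω) = g' (X ω)) :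
    IsCondMeanGiven P X A Z' g' := by
  refine of_setIntegral_eq hA hg'm fun h hh hb => ?_
  calc ∫ ω in A, Z' ω * h (X ω) ∂P
      = ∫ ω in A, Z ω * h (X ω) ∂P := setIntegral_congr_fun hA fun ω hω => by simp only [hZ ω hω]
    _ = ∫ ω in A, g (X ω) * h (X ω) ∂P := hg.setIntegral_eq hA hh hb
    _ = ∫ ω in A, g' (X ω) * h (X ω) ∂P :=
      integral_congr_ae (hgg'.mono fun ω hω => by simp only [hω])

lemma sub_comp [IsFiniteMeasure P] (hg : IsCondMeanGiven P X A Z g) (hX : Measurable X)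
    (hA : MeasurableSet A) (hZ : IntegrableOn Z A P) (hum : Measurable u)
    (hu : IntegrableOn (fun ω => u (X ω)) A P) :
    IsCondMeanGiven P X A (fun ω => Z ω - u (X ω)) (fun x => g x - u x) := by
  refine of_setIntegral_eq hA (hg.1.sub hum) fun h hh hb => ?_
  have hint {f : Ω → ℝ} (hf : IntegrableOn f A P) : IntegrableOn (fun ω => f ω * h (X ω)) A P :=
    hf.mul_bdd (hh.comp hX).aestronglyMeasurable (.of_forall fun ω => hb.choose_spec (X ω))
  simp only [sub_mul]
  rw [integral_sub (hint hZ) (hint hu),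
    integral_sub (hint (hg.integrableOn_comp hX hA hZ)) (hint hu), hg.setIntegral_eq hA hh hb]

lemma of_comp_ae_eq_condExp [IsFiniteMeasure P] (hX : Measurable X) (hA : MeasurableSet A)
    (hZ : IntegrableOn Z A P) (hgm : Measurable g)
    (hg : g ∘ X =ᵐ[P.restrict A] (P.restrict A)[Z | m𝓧.comap X]) : IsCondMeanGiven P X A Z g := by
  refine of_setIntegral_eq hA hgm fun h hh ⟨C, hC⟩ => ?_
  have hhX := (hh.comp (comap_measurable X)).stronglyMeasurable
  have hZh : Integrable (Z * (h ∘ X)) (P.restrict A) :=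
    hZ.mul_bdd (hh.comp hX).aestronglyMeasurable (.of_forall fun ω => hC (X ω))
  exact ((integral_congr_ae (mul_ae_eq_condExp_mul hZ hg hhX hZh)).trans
    (integral_condExp hX.comap_le)).symm

-- The rectangles `{V ∈ s} ∩ {X ∈ t}` form a π-system generating `σ(V, X)`.
lemma prodMk [IsFiniteMeasure P] (hg : IsCondMeanGiven P X A Z g) (hX : Measurable X)
    (hV : Measurable V) (hA : MeasurableSet A) (hZ : IntegrableOn Z A P)
    (hgV : ∀ f : E → ℝ, Measurable f → (∃ C, ∀ e, |f e| ≤ C) →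
      ∀ h : 𝓧 → ℝ, Measurable h → (∃ C, ∀ x, |h x| ≤ C) →
        ∫ ω in A, Z ω * f (V ω) * h (X ω) ∂P = ∫ ω in A, g (X ω) * f (V ω) * h (X ω) ∂P) :
    IsCondMeanGiven P (fun ω => (V ω, X ω)) A Z (fun e => g e.2) := by
  have hVX : Measurable fun ω => (V ω, X ω) := hV.prodMk hX
  have hgX : IntegrableOn (fun ω => g (X ω)) A P := hg.integrableOn_comp hX hA hZ
  have hgm : Measurable fun e : E × 𝓧 => g e.2 := hg.1.comp measurable_snd
  have hrect (s : Set E) (hs : MeasurableSet s) (t : Set 𝓧) (ht : MeasurableSet t) :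
      ∫ ω in V ⁻¹' s ∩ X ⁻¹' t, g (X ω) ∂P.restrict A
        = ∫ ω in V ⁻¹' s ∩ X ⁻¹' t, Z ω ∂P.restrict A := by
    have h := hgV (ind s) (measurable_ind hs) ⟨1, abs_ind_le_one s⟩
      (ind t) (measurable_ind ht) ⟨1, abs_ind_le_one t⟩
    have hind (ω : Ω) : ind s (V ω) * ind t (X ω) = ind (V ⁻¹' s ∩ X ⁻¹' t) ω :=
      (ind_inter (V ⁻¹' s) (X ⁻¹' t) ω).symm
    simp only [mul_assoc, hind] at h
    simpa only [mul_comm _ (ind _ _), integral_ind_mul ((hV hs).inter (hX ht))] using h.symm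
  have hgen : (inferInstance : MeasurableSpace (E × 𝓧)).comap (fun ω => (V ω, X ω)) =
      MeasurableSpace.generateFrom (preimage (fun ω => (V ω, X ω)) ''
        image2 (· ×ˢ ·) {s | MeasurableSet s} {t | MeasurableSet t}) := by
    rw [← MeasurableSpace.comap_generateFrom, generateFrom_prod]
  refine of_comp_ae_eq_condExp hVX hA hZ hgm
    (ae_eq_condExp_of_forall_setIntegral_eq hVX.comap_le hZ (fun s _ _ => hgX.integrableOn)
      (fun s hs _ => setIntegral_eq_of_isPiSystem hVX.comap_le hgen (isPiSystem_prod.comap _)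
        hgX hZ ?_ ?_ hs)
      (hgm.comp (comap_measurable _)).stronglyMeasurable.aestronglyMeasurable)
  · simpa using hrect univ .univ univ .univ
  · rintro _ ⟨_, ⟨s, hs, t, ht, rfl⟩, rfl⟩
    exact hrect s hs t ht

lemma setIntegral_comp [IsFiniteMeasure P] (hp : IsCondMeanGiven P X univ (ind A) p)
    (hX : Measurable X) (hA : MeasurableSet A) (hr : Measurable r)
    (hri : IntegrableOn (fun ω => r (X ω)) A P) :
    ∫ ω in A, r (X ω) ∂P = ∫ ω, p (X ω) * r (X ω) ∂P := by
  have h := hp.setIntegral_mul_comp hX .univ (integrable_ind hA).integrableOn hr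
    ((integrable_ind_mul_iff hA).2 hri).integrableOn
  rwa [setIntegral_univ, setIntegral_univ, integral_ind_mul hA] at h

lemma ind_mul_of_univ [IsFiniteMeasure P] (hp : IsCondMeanGiven P X univ (ind A) p)
    (hg : IsCondMeanGiven P X A Z g) (hX : Measurable X) (hA : MeasurableSet A)
    (hZ : IntegrableOn Z A P) :
    IsCondMeanGiven P X univ (fun ω => ind A ω * Z ω) (fun x => g x * p x) := by
  refine of_setIntegral_eq .univ (hg.1.mul hp.1) fun h hh hb => ?_
  have hgh : IntegrableOn (fun ω => g (X ω) * h (X ω)) A P :=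
    (hg.integrableOn_comp hX hA hZ).mul_bdd (hh.comp hX).aestronglyMeasurable
      (.of_forall fun ω => hb.choose_spec (X ω))
  simp only [setIntegral_univ]
  calc ∫ ω, ind A ω * Z ω * h (X ω) ∂P
      = ∫ ω in A, g (X ω) * h (X ω) ∂P := by
        simp only [mul_assoc, integral_ind_mul hA, hg.setIntegral_eq hA hh hb]
    _ = ∫ ω, p (X ω) * (g (X ω) * h (X ω)) ∂P := hp.setIntegral_comp hX hA (hg.1.mul hh) hgh
    _ = ∫ ω, g (X ω) * p (X ω) * h (X ω) ∂P := by
        refine integral_congr_ae (.of_forall fun ω => ?_)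
        ring

lemma ae_mem_of_ae_restrict [IsFiniteMeasure P] (hp : IsCondMeanGiven P X univ (ind A) p)
    (hX : Measurable X) (hA : MeasurableSet A) {s : Set 𝓧} (hs : MeasurableSet s)
    (hXs : ∀ᵐ ω ∂P.restrict A, X ω ∈ s) : ∀ᵐ ω ∂P, 0 < p (X ω) → X ω ∈ s := by
  have hsm : Measurable (ind sᶜ) := measurable_ind hs.compl
  have hpi : Integrable (fun ω => p (X ω)) P := by
    simpa using hp.integrableOn_comp hX .univ (integrable_ind hA).integrableOn
  have hp0 : 0 ≤ᵐ[P] p ∘ X := by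
    have h := hp.comp_ae_eq_condExp hX .univ (integrable_ind hA).integrableOn
    rw [Measure.restrict_univ] at h
    exact (condExp_nonneg (.of_forall (indicator_nonneg fun _ _ => zero_le_one))).trans_eq h.symm
  have hzero : (fun ω => ind sᶜ (X ω)) =ᵐ[P.restrict A] 0 :=
    hXs.mono fun ω hω => by simp [ind, hω]
  have hint : ∫ ω, p (X ω) * ind sᶜ (X ω) ∂P = 0 := by
    rw [← hp.setIntegral_comp hX hA hsm ((integrable_zero _ _ _).congr hzero.symm),
      integral_eq_zero_of_ae hzero]
  have hmul := (integral_eq_zero_iff_of_nonneg_ae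
    (hp0.mono fun ω hω => mul_nonneg hω (indicator_nonneg (fun _ _ => zero_le_one) _))
    (hpi.mul_bdd (hsm.comp hX).aestronglyMeasurable
      (.of_forall fun ω => abs_ind_le_one sᶜ (X ω)))).1 hint
  filter_upwards [hmul] with ω hω hpos
  by_contra hmem
  exact hpos.ne' (by simpa [ind, hmem] using hω)

lemma setIntegral_div_mul_comp [IsFiniteMeasure P] (hp : IsCondMeanGiven P X univ (ind A) p)
    (hp' : IsCondMeanGiven P X univ (ind B) p') (hX : Measurable X) (hA : MeasurableSet A)
    (hB : MeasurableSet B) (hp'0 : ∀ x, p' x ≠ 0) (hr : Measurable r)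
    (hrA : IntegrableOn (fun ω => r (X ω)) A P)
    (hrB : IntegrableOn (fun ω => p (X ω) / p' (X ω) * r (X ω)) B P) :
    ∫ ω in B, p (X ω) / p' (X ω) * r (X ω) ∂P = ∫ ω in A, r (X ω) ∂P := by
  rw [hp.setIntegral_comp hX hA hr hrA,
    hp'.setIntegral_comp (r := fun x => p x / p' x * r x) hX hB ((hp.1.div hp'.1).mul hr) hrB]
  refine integral_congr_ae (.of_forall fun ω => ?_)
  have := hp'0 (X ω)
  simp only
  field_simp

end IsCondMeanGiven

section DoubleRobustness

variable [MeasurableSpace Ω] [MeasurableSpace 𝓧] {P : Measure Ω} {X : Ω → 𝓧} {A B : Set Ω}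
  {Z : Ω → ℝ} {m u ρ p p' : 𝓧 → ℝ}

/-- The mean of `W` over `A` minus the `ρ(X)`-weighted (Hájek) mean of `W` over `B`: the doubly
robust estimand for fully observed treatments, with `A = {D = d}`, `B = {D = d'}` and
`W = ΔY - μ_{d'}(X)`. -/
def hajekContrast (P : Measure Ω) (X : Ω → 𝓧) (A B : Set Ω) (ρ : 𝓧 → ℝ) (W : Ω → ℝ) : ℝ :=
  ⨍ ω in A, W ω ∂P - (∫ ω in B, ρ (X ω) ∂P)⁻¹ * ∫ ω in B, W ω * ρ (X ω) ∂P

lemma IsCondMeanGiven.setIntegral_sub_mul_comp [IsFiniteMeasure P]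
    (hm : IsCondMeanGiven P X B Z m) (hX : Measurable X) (hB : MeasurableSet B)
    (hZ : IntegrableOn Z B P) (hum : Measurable u) (hu : IntegrableOn (fun ω => u (X ω)) B P)
    (hρ : Measurable ρ) (hZρ : IntegrableOn (fun ω => (Z ω - u (X ω)) * ρ (X ω)) B P) :
    ∫ ω in B, (Z ω - u (X ω)) * ρ (X ω) ∂P = ∫ ω in B, (m (X ω) - u (X ω)) * ρ (X ω) ∂P :=
  (hm.sub_comp hX hB hZ hum hu).setIntegral_mul_comp hX hB (hZ.sub hu) hρ hZρ

lemma hajekContrast_eq_of_outcome_model [IsFiniteMeasure P] (hX : Measurable X)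
    (hB : MeasurableSet B) (hm : IsCondMeanGiven P X B Z m) (hZ : IntegrableOn Z B P)
    (hum : Measurable u) (hu : IntegrableOn (fun ω => u (X ω)) B P)
    (hρ : Measurable ρ) (hZρ : IntegrableOn (fun ω => (Z ω - u (X ω)) * ρ (X ω)) B P)
    (hmA : ∀ᵐ ω ∂P.restrict A, m (X ω) = u (X ω)) (hmB : ∀ᵐ ω ∂P.restrict B, m (X ω) = u (X ω)) :
    hajekContrast P X A B ρ (fun ω => Z ω - u (X ω)) = ⨍ ω in A, (Z ω - m (X ω)) ∂P := by
  have hzero : ∫ ω in B, (Z ω - u (X ω)) * ρ (X ω) ∂P = 0 := by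
    rw [hm.setIntegral_sub_mul_comp hX hB hZ hum hu hρ hZρ]
    exact integral_eq_zero_of_ae (hmB.mono fun ω hω => by simp [hω])
  rw [hajekContrast, hzero, mul_zero, sub_zero]
  exact average_congr (hmA.mono fun ω hω => by simp only [hω])

lemma hajekContrast_eq_of_propensity_model [IsFiniteMeasure P] (hX : Measurable X)
    (hA : MeasurableSet A) (hB : MeasurableSet B) (hm : IsCondMeanGiven P X B Z m)
    (hZA : IntegrableOn Z A P) (hmA : IntegrableOn (fun ω => m (X ω)) A P)
    (hZB : IntegrableOn Z B P) (hum : Measurable u) (hu : Integrable (fun ω => u (X ω)) P)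
    (hp : IsCondMeanGiven P X univ (ind A) p) (hp' : IsCondMeanGiven P X univ (ind B) p')
    (hp'0 : ∀ x, p' x ≠ 0) (hρi : IntegrableOn (fun ω => p (X ω) / p' (X ω)) B P)
    (hZρ : IntegrableOn (fun ω => (Z ω - u (X ω)) * (p (X ω) / p' (X ω))) B P) :
    hajekContrast P X A B (fun x => p x / p' x) (fun ω => Z ω - u (X ω))
      = ⨍ ω in A, (Z ω - m (X ω)) ∂P := by
  have hρ : Measurable fun x => p x / p' x := hp.1.div hp'.1
  have hmass : ∫ ω in B, p (X ω) / p' (X ω) ∂P = P.real A := by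
    simpa using hp.setIntegral_div_mul_comp (r := fun _ => 1) hp' hX hA hB hp'0 measurable_const
      (integrable_const 1) (by simpa using hρi)
  have hZu : IntegrableOn (fun ω => Z ω - u (X ω)) A P := hZA.sub hu.integrableOn
  have hmu : IntegrableOn (fun ω => m (X ω) - u (X ω)) A P := hmA.sub hu.integrableOn
  have hmuρ : IntegrableOn (fun ω => p (X ω) / p' (X ω) * (m (X ω) - u (X ω))) B P := by
    simpa only [mul_comm] using
      (hm.sub_comp hX hB hZB hum hu.integrableOn).integrableOn_comp_mul hX hB
        (hZB.sub hu.integrableOn) hρ hZρ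
  have hbias : ∫ ω in B, (Z ω - u (X ω)) * (p (X ω) / p' (X ω)) ∂P
      = ∫ ω in A, (m (X ω) - u (X ω)) ∂P := by
    rw [hm.setIntegral_sub_mul_comp hX hB hZB hum hu.integrableOn hρ hZρ,
      ← hp.setIntegral_div_mul_comp (r := fun x => m x - u x) hp' hX hA hB hp'0 (hm.1.sub hum)
        hmu hmuρ]
    simp only [mul_comm]
  rw [hajekContrast, hmass, hbias, setAverage_eq, setAverage_eq, smul_eq_mul, smul_eq_mul,
    ← mul_sub, ← integral_sub hZu hmu]
  simp only [sub_sub_sub_cancel_right]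

end DoubleRobustness

section Treatment

variable {D1 D2 Y0 Y2 : Ω → ℝ} {Y0p Y2p : ℝ × ℝ → Ω → ℝ} {d d' : ℝ × ℝ}

lemma disjoint_evD (hdd' : d ≠ d') : Disjoint (evD D1 D2 d) (evD D1 D2 d') :=
  Set.disjoint_left.2 fun _ hω hω' =>
    hdd' (Prod.ext (hω.1.symm.trans hω'.1) (hω.2.symm.trans hω'.2))

lemma eq_of_mem_evD {Y : Ω → ℝ} {Yp : ℝ × ℝ → Ω → ℝ} (hcons : ∀ ω, Y ω = Yp (D1 ω, D2 ω) ω)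
    {ω : Ω} (hω : ω ∈ evD D1 D2 d) : Y ω = Yp d ω := by
  rw [hcons, hω.1, hω.2]

variable [MeasurableSpace Ω] [MeasurableSpace 𝓧] {P : Measure Ω} {X : Ω → 𝓧}

lemma measurableSet_evD (hD1 : Measurable D1) (hD2 : Measurable D2) (d : ℝ × ℝ) :
    MeasurableSet (evD D1 D2 d) :=
  (hD1 (measurableSet_singleton d.1)).inter (hD2 (measurableSet_singleton d.2))

lemma measurableSet_evD2 (hD2 : Measurable D2) (b : ℝ) : MeasurableSet (evD2 D2 b) :=
  hD2 (measurableSet_singleton b)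

lemma integrableOn_evD (hD1 : Measurable D1) (hD2 : Measurable D2) {Y : Ω → ℝ}
    {Yp : ℝ × ℝ → Ω → ℝ} (hcons : ∀ ω, Y ω = Yp (D1 ω, D2 ω) ω) (hYp : Integrable (Yp d) P) :
    IntegrableOn Y (evD D1 D2 d) P :=
  hYp.integrableOn.congr_fun (fun _ hω => (eq_of_mem_evD hcons hω).symm)
    (measurableSet_evD hD1 hD2 d)

lemma isCondMeanGiven_ind_evD [IsFiniteMeasure P] (hX : Measurable X) (hD1 : Measurable D1)
    (hD2 : Measurable D2) {πc π2 : 𝓧 → ℝ}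
    (hπc : IsCondMeanGiven P X (evD2 D2 d.2) (ind {ω | D1 ω = d.1}) πc)
    (hπ2 : IsCondMeanGiven P X univ (ind (evD2 D2 d.2)) π2) :
    IsCondMeanGiven P X univ (ind (evD D1 D2 d)) (fun x => πc x * π2 x) := by
  have hD1d : MeasurableSet {ω | D1 ω = d.1} := hD1 (measurableSet_singleton d.1)
  have hind : ind (evD D1 D2 d) = fun ω => ind (evD2 D2 d.2) ω * ind {ω | D1 ω = d.1} ω := by
    funext ω
    rw [mul_comm]
    exact ind_inter {ω | D1 ω = d.1} (evD2 D2 d.2) ω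
  rw [hind]
  exact hπ2.ind_mul_of_univ hπc hX (measurableSet_evD2 hD2 d.2) (integrable_ind hD1d).integrableOn

lemma DID.exists_common_trend [IsFiniteMeasure P] (hd : DID P X D1 D2 Y0p Y2p d)
    (hd' : DID P X D1 D2 Y0p Y2p d') (hX : Measurable X) (hD1 : Measurable D1)
    (hD2 : Measurable D2) (hY : Integrable (fun ω => Y2p (0, 0) ω - Y0p (0, 0) ω) P) :
    ∃ tr : 𝓧 → ℝ,
      IsCondMeanGiven P X (evD D1 D2 d) (fun ω => Y2p (0, 0) ω - Y0p (0, 0) ω) tr ∧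
      IsCondMeanGiven P X (evD D1 D2 d') (fun ω => Y2p (0, 0) ω - Y0p (0, 0) ω) tr := by
  obtain ⟨-, tr, htr, htrd⟩ := hd
  obtain ⟨-, tr', htr', htrd'⟩ := hd'
  have heq : ∀ᵐ ω ∂P, tr' (X ω) = tr (X ω) := by
    simpa using htr'.ae_eq htr hX .univ hY.integrableOn
  exact ⟨tr, htrd, htrd'.congr (measurableSet_evD hD1 hD2 d') htr.1 (fun _ _ => rfl)
    (ae_restrict_of_ae heq)⟩

lemma DID.tau_eq_setAverage [IsFiniteMeasure P] (hDID : DID P X D1 D2 Y0p Y2p d)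
    (hX : Measurable X) (hD1 : Measurable D1) (hD2 : Measurable D2)
    (hY0p : Integrable (Y0p d) P) (hY2p : Integrable (Y2p d) P)
    (hY0p' : Integrable (Y0p (0, 0)) P) (hY2p' : Integrable (Y2p (0, 0)) P)
    (hcons0 : ∀ ω, Y0 ω = Y0p (D1 ω, D2 ω) ω) (hcons2 : ∀ ω, Y2 ω = Y2p (D1 ω, D2 ω) ω)
    {tr : 𝓧 → ℝ}
    (htr : IsCondMeanGiven P X (evD D1 D2 d) (fun ω => Y2p (0, 0) ω - Y0p (0, 0) ω) tr) :
    tau P D1 D2 Y2p d = ⨍ ω in evD D1 D2 d, (Y2 ω - Y0 ω - tr (X ω)) ∂P := by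
  have hA := measurableSet_evD hD1 hD2 d
  have htri := htr.integrableOn_comp hX hA (hY2p'.sub hY0p').integrableOn
  have hYd : IntegrableOn (fun ω => Y2p d ω - Y0p d ω) (evD D1 D2 d) P :=
    (hY2p.sub hY0p).integrableOn
  have hone : ∃ C, ∀ _ : 𝓧, |(1 : ℝ)| ≤ C := ⟨1, fun _ => abs_one.le⟩
  have hanticipation : ∫ ω in evD D1 D2 d, Y0p d ω ∂P = ∫ ω in evD D1 D2 d, Y0p (0, 0) ω ∂P := by
    simpa only [mul_one, integral_ind_mul hA] using hDID.1 _ measurable_const hone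
  have htrend : ∫ ω in evD D1 D2 d, (Y2p (0, 0) ω - Y0p (0, 0) ω) ∂P
      = ∫ ω in evD D1 D2 d, tr (X ω) ∂P := by
    simpa only [mul_one] using htr.setIntegral_eq hA measurable_const hone
  have hobserved : ∫ ω in evD D1 D2 d, (Y2 ω - Y0 ω - tr (X ω)) ∂P
      = ∫ ω in evD D1 D2 d, (Y2p d ω - Y0p d ω - tr (X ω)) ∂P :=
    setIntegral_congr_fun hA fun ω hω => by
      simp only [eq_of_mem_evD hcons0 hω, eq_of_mem_evD hcons2 hω]
  rw [integral_sub hY2p'.integrableOn hY0p'.integrableOn] at htrend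
  rw [tau, setAverage_eq, smul_eq_mul, hobserved, integral_sub hYd htri,
    integral_sub hY2p.integrableOn hY0p.integrableOn,
    integral_sub hY2p.integrableOn hY2p'.integrableOn, ← htrend, hanticipation, Measure.real]
  ring

end Treatment

section Missingness

variable {X : Ω → 𝓧} {D1 D2 S Y0 Y2 : Ω → ℝ} {d d' : ℝ × ℝ} {φ φ' ρ u : 𝓧 → ℝ}

lemma n1_eq_zero {ω : Ω} (hω : ω ∉ evD D1 D2 d) : n1 X D1 D2 S φ d ω = 0 := by
  simp [n1, ind, hω]

lemma n1_mul_eq_ind_mul (ω : Ω) (K : ℝ) :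
    n1 X D1 D2 S φ d ω * K
      = ind (evD2 D2 d.2) ω * (S ω * (ind {d.1} (D1 ω) / φ (X ω) * K)) := by
  have hind : ind (evD D1 D2 d) ω = ind {d.1} (D1 ω) * ind (evD2 D2 d.2) ω :=
    ind_inter (D1 ⁻¹' {d.1}) (evD2 D2 d.2) ω
  rw [n1, hind]
  ring

lemma n2_eq_n1_mul {φ0 πc πc' π2 π0 : 𝓧 → ℝ} (ω : Ω) :
    n2 X D1 D2 S φ0 πc πc' π2 π0 ω
      = n1 X D1 D2 S φ0 (0, 0) ω * (πc (X ω) * π2 (X ω) / (πc' (X ω) * π0 (X ω))) := by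
  rw [n2, n1]
  ring

variable [MeasurableSpace Ω] {P : Measure Ω}

lemma integrable_n1_mul_of_integrable_sub (hD1 : Measurable D1) (hD2 : Measurable D2)
    (hdd' : d ≠ d') {W : Ω → ℝ} {c c' : ℝ} (hc : c ≠ 0) (hc' : c' ≠ 0)
    (hi : Integrable (fun ω => (n1 X D1 D2 S φ d ω / c - n1 X D1 D2 S φ' d' ω * ρ (X ω) / c')
      * W ω) P) :
    Integrable (fun ω => n1 X D1 D2 S φ d ω * W ω) P ∧
      Integrable (fun ω => n1 X D1 D2 S φ' d' ω * (W ω * ρ (X ω))) P := by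
  have hsplit : Integrable (fun ω => c⁻¹ * (n1 X D1 D2 S φ d ω * W ω)
      - c'⁻¹ * (n1 X D1 D2 S φ' d' ω * (W ω * ρ (X ω)))) P := by
    refine hi.congr (.of_forall fun ω => ?_)
    ring
  obtain ⟨h, h'⟩ := integrable_and_integrable_of_sub (measurableSet_evD hD1 hD2 d)
    (fun ω hω => by simp [n1_eq_zero hω])
    (fun ω hω => by simp [n1_eq_zero (Set.disjoint_left.1 (disjoint_evD hdd') hω)]) hsplit
  exact ⟨(integrable_const_mul_iff (isUnit_iff_ne_zero.2 (inv_ne_zero hc)) _).1 h,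
    (integrable_const_mul_iff (isUnit_iff_ne_zero.2 (inv_ne_zero hc')) _).1 h'⟩

variable [MeasurableSpace 𝓧] {q : ℝ → 𝓧 → ℝ}

lemma MAR.isCondMeanGiven_prodMk [IsFiniteMeasure P] (hMAR : MAR P X D1 D2 S Y0 Y2 q)
    (hX : Measurable X) (hY0 : Measurable Y0) (hY2 : Measurable Y2) (hD1 : Measurable D1)
    (hD2 : Measurable D2) (hS : Integrable S P) {b : ℝ} (hb : b ∈ ({0, 1} : Set ℝ)) :
    IsCondMeanGiven P (fun ω => ((D1 ω, Y2 ω - Y0 ω), X ω)) (evD2 D2 b) S (fun z => q b z.2) := by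
  have hB := measurableSet_evD2 hD2 b
  refine (hMAR.1 b hb).prodMk hX (by fun_prop) hB hS.integrableOn fun f hf hfb h hh hhb => ?_
  simpa only [mul_assoc, integral_ind_mul hB] using hMAR.2.2 b hb f hf hfb h hh hhb

lemma MAR.integrableOn_and_integral_n1_mul [IsFiniteMeasure P] (hMAR : MAR P X D1 D2 S Y0 Y2 q)
    (hX : Measurable X) (hY0 : Measurable Y0) (hY2 : Measurable Y2) (hD1 : Measurable D1)
    (hD2 : Measurable D2) (hS : Integrable S P) (hd : d.2 ∈ ({0, 1} : Set ℝ))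
    (hφm : Measurable φ) (hφ : ∀ᵐ ω ∂P, φ (X ω) = q d.2 (X ω))
    {K : ℝ × 𝓧 → ℝ} (hK : Measurable K)
    (hi : Integrable (fun ω => n1 X D1 D2 S φ d ω * K (Y2 ω - Y0 ω, X ω)) P) :
    IntegrableOn (fun ω => K (Y2 ω - Y0 ω, X ω)) (evD D1 D2 d) P ∧
      ∫ ω, n1 X D1 D2 S φ d ω * K (Y2 ω - Y0 ω, X ω) ∂P
        = ∫ ω in evD D1 D2 d, K (Y2 ω - Y0 ω, X ω) ∂P := by
  let r (z : (ℝ × ℝ) × 𝓧) : ℝ := ind {d.1} z.1.1 / φ z.2 * K (z.1.2, z.2)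
  have hr : Measurable r := by
    have := measurable_ind (measurableSet_singleton d.1)
    fun_prop
  have hB := measurableSet_evD2 hD2 d.2
  have hC : MeasurableSet (D1 ⁻¹' {d.1}) := hD1 (measurableSet_singleton d.1)
  have hq := hMAR.isCondMeanGiven_prodMk hX hY0 hY2 hD1 hD2 hS hd
  have hT : Measurable fun ω => ((D1 ω, Y2 ω - Y0 ω), X ω) := by fun_prop
  have hcancel : (fun ω => q d.2 (X ω) * r ((D1 ω, Y2 ω - Y0 ω), X ω)) =ᵐ[P.restrict (evD2 D2 d.2)]
      fun ω => ind (D1 ⁻¹' {d.1}) ω * K (Y2 ω - Y0 ω, X ω) := by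
    filter_upwards [ae_restrict_of_ae hφ, ae_restrict_of_ae (hMAR.2.1 d.2 hd)] with ω hφω hqω
    have hne : q d.2 (X ω) ≠ 0 := hqω.1.ne'
    have hind : ind (D1 ⁻¹' {d.1}) ω = ind {d.1} (D1 ω) := rfl
    simp only [r, hφω, hind]
    field_simp
  have hrestrict : (P.restrict (evD2 D2 d.2)).restrict (D1 ⁻¹' {d.1}) = P.restrict (evD D1 D2 d) :=
    Measure.restrict_restrict hC
  simp only [n1_mul_eq_ind_mul] at hi ⊢
  have hSr := (integrable_ind_mul_iff hB).1 hi
  constructor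
  · have hqr := (hq.integrableOn_comp_mul hT hB hS.integrableOn hr hSr).congr hcancel
    rwa [integrable_ind_mul_iff hC, IntegrableOn, hrestrict] at hqr
  · rw [integral_ind_mul hB, ← hrestrict, ← integral_ind_mul hC, ← integral_congr_ae hcancel]
    exact hq.setIntegral_mul_comp hT hB hS.integrableOn hr hSr

lemma MAR.integral_hajek_eq_hajekContrast [IsFiniteMeasure P] (hMAR : MAR P X D1 D2 S Y0 Y2 q)
    (hX : Measurable X) (hY0 : Measurable Y0) (hY2 : Measurable Y2) (hD1 : Measurable D1)
    (hD2 : Measurable D2) (hS : Integrable S P)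
    (hdd' : d ≠ d') (hd : d.2 ∈ ({0, 1} : Set ℝ)) (hd' : d'.2 ∈ ({0, 1} : Set ℝ))
    (hφm : Measurable φ) (hφ : ∀ᵐ ω ∂P, φ (X ω) = q d.2 (X ω))
    (hφ'm : Measurable φ') (hφ' : ∀ᵐ ω ∂P, φ' (X ω) = q d'.2 (X ω))
    (hρ : Measurable ρ) (hu : Measurable u)
    (hc : ∫ ω, n1 X D1 D2 S φ d ω ∂P ≠ 0) (hc' : ∫ ω, n1 X D1 D2 S φ' d' ω * ρ (X ω) ∂P ≠ 0)
    (hi : Integrable (fun ω =>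
      (n1 X D1 D2 S φ d ω / ∫ ω', n1 X D1 D2 S φ d ω' ∂P
        - n1 X D1 D2 S φ' d' ω * ρ (X ω) / ∫ ω', n1 X D1 D2 S φ' d' ω' * ρ (X ω') ∂P)
      * (Y2 ω - Y0 ω - u (X ω))) P) :
    IntegrableOn (fun ω => ρ (X ω)) (evD D1 D2 d') P ∧
    IntegrableOn (fun ω => (Y2 ω - Y0 ω - u (X ω)) * ρ (X ω)) (evD D1 D2 d') P ∧
    ∫ ω, (n1 X D1 D2 S φ d ω / ∫ ω', n1 X D1 D2 S φ d ω' ∂P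
        - n1 X D1 D2 S φ' d' ω * ρ (X ω) / ∫ ω', n1 X D1 D2 S φ' d' ω' * ρ (X ω') ∂P)
      * (Y2 ω - Y0 ω - u (X ω)) ∂P
      = hajekContrast P X (evD D1 D2 d) (evD D1 D2 d') ρ
          (fun ω => Y2 ω - Y0 ω - u (X ω)) := by
  obtain ⟨hW, hW'⟩ := integrable_n1_mul_of_integrable_sub hD1 hD2 hdd' hc hc' hi
  have ipw {K : ℝ × 𝓧 → ℝ} (hK : Measurable K) :=
    hMAR.integrableOn_and_integral_n1_mul hX hY0 hY2 hD1 hD2 hS hd hφm hφ hK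
  have ipw' {K : ℝ × 𝓧 → ℝ} (hK : Measurable K) :=
    hMAR.integrableOn_and_integral_n1_mul hX hY0 hY2 hD1 hD2 hS hd' hφ'm hφ' hK
  have hmass : ∫ ω, n1 X D1 D2 S φ d ω ∂P = P.real (evD D1 D2 d) := by
    have h := (ipw (K := fun _ => 1) measurable_const
      (by simpa only [mul_one] using Integrable.of_integral_ne_zero hc)).2
    simpa only [mul_one, setIntegral_const, smul_eq_mul] using h
  have hmass' := ipw' (K := fun z => ρ z.2) (by fun_prop) (.of_integral_ne_zero hc')
  have hmean := ipw (K := fun z => z.1 - u z.2) (by fun_prop) hW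
  have hmean' := ipw' (K := fun z => (z.1 - u z.2) * ρ z.2) (by fun_prop) hW'
  refine ⟨hmass'.1, hmean'.1, ?_⟩
  rw [hajekContrast, setAverage_eq, smul_eq_mul, ← hmass, ← hmass'.2, ← hmean.2, ← hmean'.2,
    ← integral_const_mul, ← integral_const_mul,
    ← integral_sub (hW.const_mul _) (hW'.const_mul _)]
  refine integral_congr_ae (.of_forall fun ω => ?_)
  ring

end Missingness

theorem statement_10_general [MeasurableSpace Ω] [MeasurableSpace 𝓧]
    {P : Measure Ω} [IsFiniteMeasure P] {X : Ω → 𝓧} (hX : Measurable X)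
    {Y0 Y2 D1 D2 S : Ω → ℝ} (hY0 : Measurable Y0) (hY2 : Measurable Y2)
    (hD1 : Measurable D1) (hD2 : Measurable D2) (hS : Integrable S P)
    {d : ℝ × ℝ} (hd : d ≠ (0, 0)) (hd2 : d.2 ∈ ({0, 1} : Set ℝ))
    {Y0p Y2p : ℝ × ℝ → Ω → ℝ}
    (hY0p : Integrable (Y0p d) P) (hY0p' : Integrable (Y0p (0, 0)) P)
    (hY2p : Integrable (Y2p d) P) (hY2p' : Integrable (Y2p (0, 0)) P)
    (hcons0 : ∀ ω, Y0 ω = Y0p (D1 ω, D2 ω) ω) (hcons2 : ∀ ω, Y2 ω = Y2p (D1 ω, D2 ω) ω)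
    (hDIDd : DID P X D1 D2 Y0p Y2p d) (hDIDd' : DID P X D1 D2 Y0p Y2p (0, 0))
    {q : ℝ → 𝓧 → ℝ} (hMAR : MAR P X D1 D2 S Y0 Y2 q)
    {pd' : 𝓧 → ℝ} (hpd' : IsCondMeanGiven P X univ (ind (evD D1 D2 (0, 0))) pd')
    (hpd'pos : ∀ᵐ ω ∂P.restrict (evD D1 D2 d), 0 < pd' (X ω))
    {μd' πc πc' π2 π0 φ2 φ0 : 𝓧 → ℝ}
    (hμd'm : Measurable μd') (hμd'i : Integrable (fun ω => μd' (X ω)) P)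
    (hπcm : Measurable πc) (hπc'm : Measurable πc')
    (hπ2m : Measurable π2) (hπ0m : Measurable π0)
    (hπc'0 : ∀ x, πc' x ≠ 0) (hπ00 : ∀ x, π0 x ≠ 0)
    (hφ2m : Measurable φ2) (hφ0m : Measurable φ0)
    (hn1 : ∫ ω, n1 X D1 D2 S φ2 d ω ∂P ≠ 0)
    (hn2 : ∫ ω, n2 X D1 D2 S φ0 πc πc' π2 π0 ω ∂P ≠ 0)
    (hint : Integrable (fun ω =>
        (n1 X D1 D2 S φ2 d ω / ∫ ω', n1 X D1 D2 S φ2 d ω' ∂P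
          - n2 X D1 D2 S φ0 πc πc' π2 π0 ω / ∫ ω', n2 X D1 D2 S φ0 πc πc' π2 π0 ω' ∂P)
        * (Y2 ω - Y0 ω - μd' (X ω))) P)
    (hφ2 : ∀ᵐ ω ∂P, φ2 (X ω) = q d.2 (X ω)) (hφ0 : ∀ᵐ ω ∂P, φ0 (X ω) = q 0 (X ω))
    (hcase :
      (∃ md' : 𝓧 → ℝ,
          IsCondMeanGiven P X (evD D1 D2 (0, 0)) (fun ω => Y2 ω - Y0 ω) md' ∧
          ∀ᵐ ω ∂P, μd' (X ω) = md' (X ω)) ∨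
      (IsCondMeanGiven P X (evD2 D2 d.2) (ind {ω | D1 ω = d.1}) πc ∧
        IsCondMeanGiven P X univ (ind (evD2 D2 d.2)) π2 ∧
        IsCondMeanGiven P X (evD2 D2 0) (ind {ω | D1 ω = 0}) πc' ∧
        IsCondMeanGiven P X univ (ind (evD2 D2 0)) π0)) :
    ∫ ω, (n1 X D1 D2 S φ2 d ω / ∫ ω', n1 X D1 D2 S φ2 d ω' ∂P
          - n2 X D1 D2 S φ0 πc πc' π2 π0 ω / ∫ ω', n2 X D1 D2 S φ0 πc πc' π2 π0 ω' ∂P)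
        * (Y2 ω - Y0 ω - μd' (X ω)) ∂P
      = tau P D1 D2 Y2p d := by
  have hA := measurableSet_evD hD1 hD2 d
  have hB := measurableSet_evD hD1 hD2 (0, 0)
  have hΔA : IntegrableOn (fun ω => Y2 ω - Y0 ω) (evD D1 D2 d) P :=
    (integrableOn_evD hD1 hD2 hcons2 hY2p).sub (integrableOn_evD hD1 hD2 hcons0 hY0p)
  have hΔB : IntegrableOn (fun ω => Y2 ω - Y0 ω) (evD D1 D2 (0, 0)) P :=
    (integrableOn_evD hD1 hD2 hcons2 hY2p').sub (integrableOn_evD hD1 hD2 hcons0 hY0p')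
  obtain ⟨tr, htr, htr'⟩ := hDIDd.exists_common_trend hDIDd' hX hD1 hD2 (hY2p'.sub hY0p')
  have htrΔ : IsCondMeanGiven P X (evD D1 D2 (0, 0)) (fun ω => Y2 ω - Y0 ω) tr :=
    htr'.congr hB htr.1 (fun ω hω => by rw [eq_of_mem_evD hcons0 hω, eq_of_mem_evD hcons2 hω])
      (.of_forall fun _ => rfl)
  have hρ : Measurable fun x => πc x * π2 x / (πc' x * π0 x) := by fun_prop
  simp only [n2_eq_n1_mul] at hn2 hint ⊢
  obtain ⟨hρi, hΔρ, hdr⟩ := hMAR.integral_hajek_eq_hajekContrast hX hY0 hY2 hD1 hD2 hS hd hd2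
    (by simp) hφ2m hφ2 hφ0m hφ0 hρ hμd'm hn1 hn2 hint
  rw [hdr, hDIDd.tau_eq_setAverage hX hD1 hD2 hY0p hY2p hY0p' hY2p' hcons0 hcons2 htr]
  rcases hcase with ⟨md', hmd', hμ⟩ | ⟨hπc, hπ2, hπc', hπ0⟩
  · have htrB : ∀ᵐ ω ∂P.restrict (evD D1 D2 (0, 0)), tr (X ω) = μd' (X ω) := by
      filter_upwards [htrΔ.ae_eq hmd' hX hB hΔB, ae_restrict_of_ae hμ] with ω htrω hμω
      rw [htrω, hμω]
    have htrA : ∀ᵐ ω ∂P.restrict (evD D1 D2 d), tr (X ω) = μd' (X ω) := by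
      filter_upwards [hpd'pos, ae_restrict_of_ae (hpd'.ae_mem_of_ae_restrict hX hB
        (measurableSet_eq_fun htr.1 hμd'm) htrB)] with ω hpos hmem using hmem hpos
    exact hajekContrast_eq_of_outcome_model hX hB htrΔ hΔB hμd'm hμd'i.integrableOn hρ hΔρ
      htrA htrB
  · exact hajekContrast_eq_of_propensity_model hX hA hB htrΔ hΔA
      (htr.integrableOn_comp hX hA (hY2p'.sub hY0p').integrableOn) hΔB hμd'm hμd'i
      (isCondMeanGiven_ind_evD hX hD1 hD2 hπc hπ2)
      (isCondMeanGiven_ind_evD hX hD1 hD2 hπc' hπ0)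
      (fun x => mul_ne_zero (hπc'0 x) (hπ00 x)) hρi hΔρ

/-- Proposition 3 (doubly robust estimand): with a correct missing-data model and either a
correct outcome model or a correct propensity-score model, the missingness-adjusted DR
estimand identifies the PDATT. -/
theorem statement_10
    [MeasurableSpace Ω] [m𝓧 : MeasurableSpace 𝓧]
    (P : Measure Ω) [IsProbabilityMeasure P]
    (X : Ω → 𝓧) (hX : Measurable X)
    (Y0 Y2 D1 D2 S : Ω → ℝ)
    (hY0 : Measurable Y0) (hY2 : Measurable Y2)
    (hD1 : Measurable D1) (hD2 : Measurable D2) (hS : Measurable S)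
    (hY0i : Integrable Y0 P) (hY2i : Integrable Y2 P)
    (hD1v : ∀ ω, D1 ω = 0 ∨ D1 ω = 1) (hD2v : ∀ ω, D2 ω = 0 ∨ D2 ω = 1)
    (hSv : ∀ ω, S ω = 0 ∨ S ω = 1)
    (Y0p Y2p : ℝ × ℝ → Ω → ℝ)
    (hY0p : ∀ e ∈ allPaths, Measurable (Y0p e) ∧ Integrable (Y0p e) P)
    (hY2p : ∀ e ∈ allPaths, Measurable (Y2p e) ∧ Integrable (Y2p e) P)
    (hcons0 : ∀ ω, Y0 ω = Y0p (D1 ω, D2 ω) ω)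
    (hcons2 : ∀ ω, Y2 ω = Y2p (D1 ω, D2 ω) ω)
    (d : ℝ × ℝ) (hd : d ∈ threePaths)
    (hDIDd : DID P X D1 D2 Y0p Y2p d) (hDIDd' : DID P X D1 D2 Y0p Y2p (0, 0))
    (q : ℝ → 𝓧 → ℝ) (hMAR : MAR P X D1 D2 S Y0 Y2 q)
    (pd pd' : 𝓧 → ℝ)
    (hpd : IsCondMeanGiven P X Set.univ (ind (evD D1 D2 d)) pd)
    (hpd' : IsCondMeanGiven P X Set.univ (ind (evD D1 D2 (0, 0))) pd')
    (hpdpos : ∀ᵐ ω ∂P, 0 < pd (X ω)) (hpd'pos : ∀ᵐ ω ∂P, 0 < pd' (X ω))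
    (μd' πc πc' π2 π0 φ2 φ0 : 𝓧 → ℝ)
    (hμd'm : Measurable μd') (hμd'i : Integrable (fun ω => μd' (X ω)) P)
    (hπcm : Measurable πc) (hπc'm : Measurable πc')
    (hπ2m : Measurable π2) (hπ0m : Measurable π0)
    (hπcv : ∀ x, 0 < πc x ∧ πc x < 1) (hπc'v : ∀ x, 0 < πc' x ∧ πc' x < 1)
    (hπ2v : ∀ x, 0 < π2 x ∧ π2 x < 1) (hπ0v : ∀ x, 0 < π0 x ∧ π0 x < 1)
    (hφ2m : Measurable φ2) (hφ0m : Measurable φ0)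
    (hφ2v : ∀ x, 0 < φ2 x ∧ φ2 x ≤ 1) (hφ0v : ∀ x, 0 < φ0 x ∧ φ0 x ≤ 1)
    (hn1i : Integrable (n1 X D1 D2 S φ2 d) P)
    (hn1pos : 0 < ∫ ω, n1 X D1 D2 S φ2 d ω ∂P)
    (hn2i : Integrable (n2 X D1 D2 S φ0 πc πc' π2 π0) P)
    (hn2pos : 0 < ∫ ω, n2 X D1 D2 S φ0 πc πc' π2 π0 ω ∂P)
    (hint : Integrable (fun ω =>
        (n1 X D1 D2 S φ2 d ω / ∫ ω', n1 X D1 D2 S φ2 d ω' ∂P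
          - n2 X D1 D2 S φ0 πc πc' π2 π0 ω / ∫ ω', n2 X D1 D2 S φ0 πc πc' π2 π0 ω' ∂P)
        * (Y2 ω - Y0 ω - μd' (X ω))) P)
    (hφ2_corr : ∀ᵐ ω ∂P, φ2 (X ω) = q d.2 (X ω))
    (hφ0_corr : ∀ᵐ ω ∂P, φ0 (X ω) = q 0 (X ω))
    (hcase :
      (∃ md' : 𝓧 → ℝ,
          IsCondMeanGiven P X (evD D1 D2 (0, 0)) (fun ω => Y2 ω - Y0 ω) md' ∧
          ∀ᵐ ω ∂P, μd' (X ω) = md' (X ω)) ∨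
      (IsCondMeanGiven P X (evD2 D2 d.2) (ind {ω | D1 ω = d.1}) πc ∧
        IsCondMeanGiven P X Set.univ (ind (evD2 D2 d.2)) π2 ∧
        IsCondMeanGiven P X (evD2 D2 0) (ind {ω | D1 ω = 0}) πc' ∧
        IsCondMeanGiven P X Set.univ (ind (evD2 D2 0)) π0)) :
    ∫ ω, (n1 X D1 D2 S φ2 d ω / ∫ ω', n1 X D1 D2 S φ2 d ω' ∂P
          - n2 X D1 D2 S φ0 πc πc' π2 π0 ω / ∫ ω', n2 X D1 D2 S φ0 πc πc' π2 π0 ω' ∂P)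
        * (Y2 ω - Y0 ω - μd' (X ω)) ∂P
      = tau P D1 D2 Y2p d := by
  obtain ⟨hd0, hd2, hd'⟩ : d ≠ (0, 0) ∧ d.2 ∈ ({0, 1} : Set ℝ) ∧ d ∈ allPaths := by
    rcases hd with rfl | rfl | rfl <;> simp [allPaths]
  have h0 : (0, 0) ∈ allPaths := by simp [allPaths]
  exact statement_10_general hX hY0 hY2 hD1 hD2 (integrable_of_eq_zero_or_eq_one hS hSv) hd0 hd2
    (hY0p d hd').2 (hY0p _ h0).2 (hY2p d hd').2 (hY2p _ h0).2 hcons0 hcons2 hDIDd hDIDd' hMAR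
    hpd' (ae_restrict_of_ae hpd'pos) hμd'm hμd'i hπcm hπc'm hπ2m hπ0m (fun x => (hπc'v x).1.ne')
    (fun x => (hπ0v x).1.ne') hφ2m hφ0m hn1pos.ne' hn2pos.ne' hint hφ2_corr hφ0_corr hcase

end DIDMissing
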